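/- Let L ≥ 2 and θ ∈ ℝ. The self-dual Hamiltonian H_SD(θ) = H_BLBQ(θ) + U_KT H_BLBQ(θ) U_KT commutes with the projection P onto the hole-free subspace and with the total hole number N_h = Σ_{j=1}^{L} h_j; in particular the hole-free subspace H_{1/2} is an invariant subspace of H_SD(θ). -/

import Mathlib

noncomputable section
open Complex Matrix

/-- The Hilbert space operators of the `L`-site spin-1 chain: matrices on `(ℂ³)^{⊗L}`,
with the tensor factors indexed by sites and the single-site ordered basis `(|+⟩,|0⟩,|−⟩)`. -/
abbrev Op (L : ℕ) : Type := Matrix (Fin L → Fin 3) (Fin L → Fin 3) ℂ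

/-- The spin-1 matrix `Sˣ`. -/
def Sx : Matrix (Fin 3) (Fin 3) ℂ :=
  ((Real.sqrt 2 : ℝ) : ℂ)⁻¹ • !![0, 1, 0; 1, 0, 1; 0, 1, 0]

/-- The spin-1 matrix `Sʸ`. -/
def Sy : Matrix (Fin 3) (Fin 3) ℂ :=
  ((Real.sqrt 2 : ℝ) : ℂ)⁻¹ • !![0, -I, 0; I, 0, -I; 0, I, 0]

/-- The spin-1 matrix `Sᶻ = diag(1,0,−1)`. -/
def Sz : Matrix (Fin 3) (Fin 3) ℂ := !![1, 0, 0; 0, 0, 0; 0, 0, -1]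

/-- `site A j` is the one-site operator `A` acting on site `j` and identity elsewhere. -/
def site {L : ℕ} (A : Matrix (Fin 3) (Fin 3) ℂ) (j : Fin L) : Op L :=
  Matrix.of fun f g => ∏ k : Fin L, if k = j then A (f k) (g k) else (if f k = g k then 1 else 0)

/-- One factor `exp(iπ Sᶻ_u Sˣ_v)` of the Kennedy–Tasaki transformation. -/
def ktFactor {L : ℕ} (u v : Fin L) : Op L :=
  NormedSpace.exp (((Real.pi : ℂ) * I) • (site Sz u * site Sx v))

/-- The Kennedy–Tasaki transformation `U_KT = ∏_{1 ≤ u < v ≤ L} exp(iπ Sᶻ_u Sˣ_v)`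
(the factors pairwise commute, so the ordering is immaterial). -/
def UKT (L : ℕ) : Op L :=
  ((List.finRange L).map fun u =>
    ((List.finRange L).map fun v => if u < v then ktFactor u v else 1).prod).prod

/-- The p-wave basis vector `|↑⟩ = (|+⟩ − |−⟩)/√2`. -/
def up : Fin 3 → ℂ := ![((Real.sqrt 2 : ℝ) : ℂ)⁻¹, 0, -((Real.sqrt 2 : ℝ) : ℂ)⁻¹]

/-- The p-wave basis vector `|↓⟩ = |0⟩`. -/
def down : Fin 3 → ℂ := ![0, 1, 0]

/-- The p-wave basis vector `|h⟩ = (|+⟩ + |−⟩)/√2`. -/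
def hole : Fin 3 → ℂ := ![((Real.sqrt 2 : ℝ) : ℂ)⁻¹, 0, ((Real.sqrt 2 : ℝ) : ℂ)⁻¹]

/-- The rank-one operator `|a⟩⟨b|`. -/
def ketbra (a b : Fin 3 → ℂ) : Matrix (Fin 3) (Fin 3) ℂ := Matrix.vecMulVec a (star b)

/-- `σˣ = |↑⟩⟨↓| + |↓⟩⟨↑|` (annihilating `|h⟩`). -/
def sigx : Matrix (Fin 3) (Fin 3) ℂ := ketbra up down + ketbra down up

/-- `σʸ = −i|↑⟩⟨↓| + i|↓⟩⟨↑|` (annihilating `|h⟩`). -/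
def sigy : Matrix (Fin 3) (Fin 3) ℂ := (-I) • ketbra up down + I • ketbra down up

/-- `σᶻ = |↑⟩⟨↑| − |↓⟩⟨↓|` (annihilating `|h⟩`). -/
def sigz : Matrix (Fin 3) (Fin 3) ℂ := ketbra up up - ketbra down down

/-- `n = |↑⟩⟨↑| + |↓⟩⟨↓|` (annihilating `|h⟩`). -/
def nMat : Matrix (Fin 3) (Fin 3) ℂ := ketbra up up + ketbra down down

/-- `h = |h⟩⟨h|`. -/
def hMat : Matrix (Fin 3) (Fin 3) ℂ := ketbra hole hole

/-- `P = ⊗_{j=1}^L n_j`, the orthogonal projection onto the hole-free subspace. -/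
def Pproj (L : ℕ) : Op L := Matrix.of fun f g => ∏ k : Fin L, nMat (f k) (g k)

/-- The Heisenberg coupling `S_j · S_k`. -/
def heis {L : ℕ} (j k : Fin L) : Op L :=
  site Sx j * site Sx k + site Sy j * site Sy k + site Sz j * site Sz k

/-- The bilinear-biquadratic Hamiltonian
`H_BLBQ(θ) = Σ_{j=1}^{L−1} [cosθ (S_j·S_{j+1}) + sinθ (S_j·S_{j+1})²]`. -/
def HBLBQ (L : ℕ) (θ : ℝ) : Op L :=
  ∑ j : Fin L, if h : (j : ℕ) + 1 < L then
    ((Real.cos θ : ℝ) : ℂ) • heis j ⟨(j : ℕ) + 1, h⟩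
      + ((Real.sin θ : ℝ) : ℂ) • (heis j ⟨(j : ℕ) + 1, h⟩) ^ 2
  else 0

/-- The self-dual Hamiltonian `H_SD(θ) = H_BLBQ(θ) + U_KT H_BLBQ(θ) U_KT`. -/
def HSD (L : ℕ) (θ : ℝ) : Op L := HBLBQ L θ + UKT L * HBLBQ L θ * UKT L

/-- The spin-1/2 XXZ Hamiltonian written in the p-wave basis:
`H_XXZ(θ) = (cosθ−sinθ) Σ_j (−σˣ_jσˣ_{j+1} + σʸ_jσʸ_{j+1}) + sinθ Σ_j σᶻ_jσᶻ_{j+1}`. -/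
def HXXZ (L : ℕ) (θ : ℝ) : Op L :=
  ((Real.cos θ - Real.sin θ : ℝ) : ℂ) •
    (∑ j : Fin L, if h : (j : ℕ) + 1 < L then
      -(site sigx j * site sigx ⟨(j : ℕ) + 1, h⟩) + site sigy j * site sigy ⟨(j : ℕ) + 1, h⟩
    else 0)
  + ((Real.sin θ : ℝ) : ℂ) •
    (∑ j : Fin L, if h : (j : ℕ) + 1 < L then
      site sigz j * site sigz ⟨(j : ℕ) + 1, h⟩
    else 0)

/-- The global product `∏_{j=1}^L exp(c • A_j)` of commuting single-site exponentials. -/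
def globalProd (L : ℕ) (A : Matrix (Fin 3) (Fin 3) ℂ) (c : ℂ) : Op L :=
  ((List.finRange L).map fun j => NormedSpace.exp (c • site A j)).prod

/-- The symmetry flux `F^y_j = exp(−iπ Σ_{k<j} Sʸ_k) · Sʸ_j`. -/
def fluxY (L : ℕ) (j : Fin L) : Op L :=
  NormedSpace.exp ((-((Real.pi : ℂ) * I)) •
    ∑ k : Fin L, if (k : ℕ) < (j : ℕ) then site Sy k else 0) * site Sy j


def tens {L : ℕ} (A : Fin L → Matrix (Fin 3) (Fin 3) ℂ) : Op L :=
  Matrix.of fun f g => ∏ k : Fin L, A k (f k) (g k)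

lemma tens_mul {L : ℕ} (A B : Fin L → Matrix (Fin 3) (Fin 3) ℂ) :
    tens A * tens B = tens (fun k => A k * B k) := by
  ext f g
  simp only [tens, Matrix.mul_apply, Matrix.of_apply]
  rw [Fintype.prod_sum]
  simp [Finset.prod_mul_distrib]

lemma site_eq {L : ℕ} (A : Matrix (Fin 3) (Fin 3) ℂ) (j : Fin L) :
    site A j = tens (fun k => if k = j then A else 1) := by
  ext f g
  simp only [tens, site, Matrix.of_apply]
  refine Finset.prod_congr rfl fun k _ => ?_
  split_ifs <;> simp_all [Matrix.one_apply]

lemma site_mul {L : ℕ} (A B : Matrix (Fin 3) (Fin 3) ℂ) (j : Fin L) :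
    site (A * B) j = site A j * site B j := by
  rw [site_eq, site_eq, site_eq, tens_mul]
  congr 1; ext1 k
  split_ifs <;> simp

lemma site_one {L : ℕ} (j : Fin L) : site 1 j = 1 := by
  ext f g
  simp only [site, Matrix.of_apply, Matrix.one_apply, ite_self]
  rw [Fintype.prod_ite_zero]
  simp [funext_iff]

lemma site_apply' {L : ℕ} (A : Matrix (Fin 3) (Fin 3) ℂ) (j : Fin L) (f g) :
    site A j f g = A (f j) (g j) * ∏ k ∈ Finset.univ.erase j, (if f k = g k then 1 else 0) := by
  simp only [site, Matrix.of_apply]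
  rw [← Finset.mul_prod_erase _ _ (Finset.mem_univ j)]
  simp only [if_true]
  congr 1
  refine Finset.prod_congr rfl fun k hk => ?_
  simp [Finset.ne_of_mem_erase hk]

lemma site_add {L : ℕ} (A B : Matrix (Fin 3) (Fin 3) ℂ) (j : Fin L) :
    site (A + B) j = site A j + site B j := by
  ext f g
  simp only [site_apply', Matrix.add_apply, add_mul]

lemma site_smul {L : ℕ} (c : ℂ) (A : Matrix (Fin 3) (Fin 3) ℂ) (j : Fin L) :
    site (c • A) j = c • site A j := by
  ext f g
  simp only [site_apply', Matrix.smul_apply, smul_eq_mul, mul_assoc]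

def siteHom {L : ℕ} (j : Fin L) : Matrix (Fin 3) (Fin 3) ℂ →ₐ[ℂ] Op L :=
  AlgHom.ofLinearMap
    { toFun := fun A => site A j
      map_add' := fun A B => site_add A B j
      map_smul' := fun c A => site_smul c A j }
    (site_one j) (fun A B => site_mul A B j)

lemma siteHom_apply {L : ℕ} (j : Fin L) (A) : siteHom j A = site A j := rfl

lemma site_comm {L : ℕ} (A B : Matrix (Fin 3) (Fin 3) ℂ) {j k : Fin L} (h : j ≠ k) :
    Commute (site A j) (site B k) := by
  rw [Commute, SemiconjBy, site_eq, site_eq, tens_mul, tens_mul]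
  congr 1; ext1 l
  split_ifs <;> simp_all

open scoped Kronecker in
/-- two-site embedding -/
def psi {L : ℕ} (j k : Fin L) (h : j ≠ k) : Matrix (Fin 3 × Fin 3) (Fin 3 × Fin 3) ℤ →+* Op L :=
  (((Algebra.TensorProduct.lift (siteHom j) (siteHom k) (fun A B => site_comm A B h)).comp
    (Matrix.kroneckerAlgEquiv (Fin 3) (Fin 3) ℂ).symm.toAlgHom).toRingHom).comp
    (Int.castRingHom ℂ).mapMatrix

/-- integer matrices acting on a site -/
def sz {L : ℕ} (A : Matrix (Fin 3) (Fin 3) ℤ) (j : Fin L) : Op L :=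
  site (A.map (Int.cast : ℤ → ℂ)) j

open scoped Kronecker in
lemma psi_kron {L : ℕ} (j k : Fin L) (h : j ≠ k) (A B : Matrix (Fin 3) (Fin 3) ℤ) :
    psi j k h (A ⊗ₖ B) = sz A j * sz B k := by
  have : (Int.castRingHom ℂ).mapMatrix (A ⊗ₖ B)
      = (A.map (Int.cast : ℤ → ℂ)) ⊗ₖ (B.map (Int.cast : ℤ → ℂ)) := by
    ext a b; simp
  simp only [psi, RingHom.comp_apply, this]
  simp only [sz]
  simp
  exact Algebra.TensorProduct.lift_tmul _ _ _ _ _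

def X3 : Matrix (Fin 3) (Fin 3) ℤ := !![0, 1, 0; 1, 0, 1; 0, 1, 0]
def Y3 : Matrix (Fin 3) (Fin 3) ℤ := !![0, -1, 0; 1, 0, -1; 0, 1, 0]
def Z3 : Matrix (Fin 3) (Fin 3) ℤ := !![1, 0, 0; 0, 0, 0; 0, 0, -1]
def A3 : Matrix (Fin 3) (Fin 3) ℤ := !![1, 0, 0; 0, 0, 0; 0, 0, 1]
def B3 : Matrix (Fin 3) (Fin 3) ℤ := !![1, 0, 1; 0, 2, 0; 1, 0, 1]
def N3 : Matrix (Fin 3) (Fin 3) ℤ := !![1, 0, -1; 0, 2, 0; -1, 0, 1]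
def h3 : Matrix (Fin 3) (Fin 3) ℤ := !![1, 0, 1; 0, 0, 0; 1, 0, 1]

abbrev M9 := Matrix (Fin 3 × Fin 3) (Fin 3 × Fin 3) ℤ
def mk9 (M : Matrix (Fin 9) (Fin 9) ℤ) : M9 := Matrix.of fun p q =>
  M (finProdFinEquiv p) (finProdFinEquiv q)

def H9 : M9 := mk9 !![1, 0, 0, 0, 0, 0, 0, 0, 0; 0, 0, 0, 1, 0, 0, 0, 0, 0; 0, 0, -1, 0, 1, 0, 0, 0, 0; 0, 1, 0, 0, 0, 0, 0, 0, 0; 0, 0, 1, 0, 0, 0, 1, 0, 0; 0, 0, 0, 0, 0, 0, 0, 1, 0; 0, 0, 0, 0, 1, 0, -1, 0, 0; 0, 0, 0, 0, 0, 1, 0, 0, 0; 0, 0, 0, 0, 0, 0, 0, 0, 1]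
def HH9 : M9 := mk9 !![1, 0, 0, 0, 0, 0, 0, 0, 0; 0, 1, 0, 0, 0, 0, 0, 0, 0; 0, 0, 2, 0, -1, 0, 1, 0, 0; 0, 0, 0, 1, 0, 0, 0, 0, 0; 0, 0, -1, 0, 2, 0, -1, 0, 0; 0, 0, 0, 0, 0, 1, 0, 0, 0; 0, 0, 1, 0, -1, 0, 2, 0, 0; 0, 0, 0, 0, 0, 0, 0, 1, 0; 0, 0, 0, 0, 0, 0, 0, 0, 1]
def K9 : M9 := mk9 !![0, 0, -1, 0, 0, 0, 0, 0, 0; 0, -1, 0, 0, 0, 0, 0, 0, 0; -1, 0, 0, 0, 0, 0, 0, 0, 0; 0, 0, 0, 1, 0, 0, 0, 0, 0; 0, 0, 0, 0, 1, 0, 0, 0, 0; 0, 0, 0, 0, 0, 1, 0, 0, 0; 0, 0, 0, 0, 0, 0, 0, 0, -1; 0, 0, 0, 0, 0, 0, 0, -1, 0; 0, 0, 0, 0, 0, 0, -1, 0, 0]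
def G9 : M9 := mk9 !![0, 0, 0, 0, -1, 0, 0, 0, 0; 0, 0, 0, 0, 0, 0, 0, 0, 0; 0, 0, 0, 0, 1, 0, 0, 0, 0; 0, 0, 0, 0, 0, 0, 0, 0, 0; -1, 0, 1, 0, 0, 0, 1, 0, -1; 0, 0, 0, 0, 0, 0, 0, 0, 0; 0, 0, 0, 0, 1, 0, 0, 0, 0; 0, 0, 0, 0, 0, 0, 0, 0, 0; 0, 0, 0, 0, -1, 0, 0, 0, 0]
def GG9 : M9 := mk9 !![3, 0, 0, 0, 1, 0, 0, 0, 1; 0, 2, 0, 0, 0, 0, 0, 0, 0; 0, 0, 3, 0, -1, 0, 1, 0, 0; 0, 0, 0, 2, 0, 0, 0, 0, 0; 1, 0, -1, 0, 4, 0, -1, 0, 1; 0, 0, 0, 0, 0, 2, 0, 0, 0; 0, 0, 1, 0, -1, 0, 3, 0, 0; 0, 0, 0, 0, 0, 0, 0, 2, 0; 1, 0, 0, 0, 1, 0, 0, 0, 3]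

open scoped Kronecker in
lemma H9_eq : H9 + H9 = X3 ⊗ₖ X3 - Y3 ⊗ₖ Y3 + (Z3 ⊗ₖ Z3 + Z3 ⊗ₖ Z3) := by decide +kernel
lemma HH9_eq : H9 * H9 = HH9 := by decide +kernel
open scoped Kronecker in
lemma K9_eq : K9 = 1 - A3 ⊗ₖ B3 := by decide +kernel
lemma G9_eq : H9 + K9 * H9 * K9 = G9 := by decide +kernel
lemma GG9_eq : HH9 + K9 * HH9 * K9 = GG9 := by decide +kernel
open scoped Kronecker in
lemma c1 : G9 * (N3 ⊗ₖ N3) = (N3 ⊗ₖ N3) * G9 := by decide +kernel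
open scoped Kronecker in
lemma c2 : GG9 * (N3 ⊗ₖ N3) = (N3 ⊗ₖ N3) * GG9 := by decide +kernel
open scoped Kronecker in
lemma c3 : G9 * (h3 ⊗ₖ 1 + 1 ⊗ₖ h3) = (h3 ⊗ₖ 1 + 1 ⊗ₖ h3) * G9 := by decide +kernel
open scoped Kronecker in
lemma c4 : GG9 * (h3 ⊗ₖ 1 + 1 ⊗ₖ h3) = (h3 ⊗ₖ 1 + 1 ⊗ₖ h3) * GG9 := by decide +kernel
open scoped Kronecker in
lemma c5 : H9 * (B3 ⊗ₖ 1 + 1 ⊗ₖ B3 - B3 ⊗ₖ B3) = (B3 ⊗ₖ 1 + 1 ⊗ₖ B3 - B3 ⊗ₖ B3) * H9 := by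
  decide +kernel
open scoped Kronecker in
lemma c6 : H9 * (A3 ⊗ₖ 1 + 1 ⊗ₖ A3 - (A3 ⊗ₖ A3 + A3 ⊗ₖ A3))
    = (A3 ⊗ₖ 1 + 1 ⊗ₖ A3 - (A3 ⊗ₖ A3 + A3 ⊗ₖ A3)) * H9 := by
  decide +kernel

lemma exp_cube {L : ℕ} (X : Op L) (hX : X * X * X = X) :
    NormedSpace.exp (((Real.pi : ℂ) * I) • X) = 1 - (2 : ℂ) • (X * X) := by
  set c : ℂ := (Real.pi : ℂ) * I with hc
  set p : Op L := (1 / 2 : ℂ) • (X * X + X) with hp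
  set q : Op L := (1 / 2 : ℂ) • (X * X - X) with hq
  have hpow : ∀ n : ℕ, X ^ n = p + (-1 : ℂ) ^ n • q + (0 : ℂ) ^ n • (1 - X * X) := by
    have h1 : X * p = p := by
      simp only [hp, mul_smul_comm, mul_add, ← mul_assoc, hX]; rw [add_comm]
    have h2 : X * q = - q := by
      simp only [hq, mul_smul_comm, mul_sub, ← mul_assoc, hX]; rw [← smul_neg, neg_sub]
    have h3 : X * (1 - X * X) = 0 := by
      simp only [mul_sub, ← mul_assoc, hX, mul_one, sub_self]
    intro n
    induction n with
    | zero => simp only [pow_zero, hp, hq]; module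
    | succ n ih =>
      rw [pow_succ', ih, mul_add, mul_add, h1, mul_smul_comm ((-1 : ℂ) ^ n) X q, h2,
        mul_smul_comm ((0 : ℂ) ^ n) X, h3]
      simp [pow_succ]
  have hs : ∀ z : ℂ, HasSum (fun n : ℕ => ((n.factorial : ℂ)⁻¹) * z ^ n) (Complex.exp z) := by
    intro z
    have := NormedSpace.expSeries_div_hasSum_exp (z)
    rw [← Complex.exp_eq_exp_ℂ] at this
    simpa [div_eq_inv_mul] using this
  have e1 := (hs c).smul_const p
  have e2 := (hs (-c)).smul_const q
  have e3 := (hs 0).smul_const (1 - X * X)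
  have e := (e1.add e2).add e3
  rw [NormedSpace.exp_eq_tsum ℂ]
  have : (fun n : ℕ => ((n.factorial : ℂ)⁻¹) • (c • X) ^ n) = fun n : ℕ =>
      ((n.factorial : ℂ)⁻¹ * c ^ n) • p + ((n.factorial : ℂ)⁻¹ * (-c) ^ n) • q
      + ((n.factorial : ℂ)⁻¹ * 0 ^ n) • (1 - X * X) := by
    funext n
    rw [smul_pow, hpow n, neg_pow c n]
    rcases Nat.eq_zero_or_pos n with h | h
    · subst h; simp
    · rw [zero_pow h.ne']; module
  simp only [this]
  rw [e.tsum_eq, Complex.exp_neg, hc, Complex.exp_pi_mul_I, Complex.exp_zero, hp, hq]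
  module

lemma core {C A : Type*} [CommMonoid C] [Monoid A] (φ : C →* A) {L : ℕ} (F : Fin L → Fin L → C)
    (hF2 : ∀ u v, F u v * F u v = 1) (M : A) (j k : Fin L) (hjk : j ≠ k)
    (h1 : F j j = 1) (h2 : F k k = 1) (h3 : F k j = 1)
    (hout : ∀ u v, u ≠ j → u ≠ k → v ≠ j → v ≠ k → Commute (φ (F u v)) M)
    (hl : ∀ u, u ≠ j → u ≠ k → Commute (φ (F u j * F u k)) M)
    (hr : ∀ v, v ≠ j → v ≠ k → Commute (φ (F j v * F k v)) M) :
    φ (∏ u, ∏ v, F u v) * M * φ (∏ u, ∏ v, F u v) = φ (F j k) * M * φ (F j k) := by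
  let S : Submonoid C := (Submonoid.centralizer {M}).comap φ
  have hS : ∀ x, x ∈ S ↔ Commute (φ x) M := by
    intro x
    simp only [S, Submonoid.mem_comap, Submonoid.mem_centralizer_iff, Set.mem_singleton_iff,
      forall_eq]
    exact ⟨fun h => h.symm, fun h => h.symm⟩
  have split : ∀ g : Fin L → C, ∏ v, g v
      = g j * g k * ∏ v ∈ (Finset.univ.erase j).erase k, g v := by
    intro g
    rw [← Finset.mul_prod_erase _ _ (Finset.mem_univ j),
      ← Finset.mul_prod_erase (Finset.univ.erase j) g (a := k) (by simp [hjk.symm]), mul_assoc]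
  obtain ⟨R, hR, hU⟩ : ∃ R ∈ S, ∏ u, ∏ v, F u v = F j k * R := by
    refine ⟨(∏ v ∈ (Finset.univ.erase j).erase k, (F j v * F k v)) *
      ∏ u ∈ (Finset.univ.erase j).erase k, ∏ v, F u v, ?_, ?_⟩
    · refine S.mul_mem (S.prod_mem fun v hv => ?_) (S.prod_mem fun u hu => ?_)
      · simp at hv; exact (hS _).2 (hr v hv.2 hv.1)
      · simp at hu
        rw [split]
        refine S.mul_mem ((hS _).2 (hl u hu.2 hu.1)) (S.prod_mem fun v hv => ?_)
        simp at hv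
        exact (hS _).2 (hout u v hu.2 hu.1 hv.2 hv.1)
    · rw [split fun u => ∏ v, F u v, ← mul_assoc]
      congr 1
      rw [← Finset.prod_mul_distrib, split, h1, h2, h3]; simp
  have hU2 : (∏ u, ∏ v, F u v) * (∏ u, ∏ v, F u v) = 1 := by
    simp only [← Finset.prod_mul_distrib, hF2, Finset.prod_const_one]
  have hR2 : R * R = 1 := by
    have : (F j k * F j k) * (R * R) = 1 := by rw [← hU2, hU]; exact mul_mul_mul_comm _ _ _ _
    simpa [hF2] using this
  have hc := (hS R).1 hR
  rw [hU]
  calc φ (F j k * R) * M * φ (F j k * R) = φ (F j k) * (φ R * M) * φ (R * F j k) := by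
        rw [mul_comm R]; simp only [map_mul, mul_assoc]
    _ = φ (F j k) * M * (φ (R * R)) * φ (F j k) := by
        rw [hc.eq]; simp only [map_mul, mul_assoc]
    _ = _ := by rw [hR2, map_one, mul_one]

lemma rt2 : (((Real.sqrt 2 : ℝ) : ℂ)⁻¹) * (((Real.sqrt 2 : ℝ) : ℂ)⁻¹) = 1 / 2 := by
  rw [← mul_inv, ← Complex.ofReal_mul, Real.mul_self_sqrt (by norm_num)]
  norm_num

lemma Sx_eq : Sx = ((Real.sqrt 2 : ℝ) : ℂ)⁻¹ • X3.map (Int.cast : ℤ → ℂ) := by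
  rw [Sx]; congr 1
  ext a b; fin_cases a <;> fin_cases b <;> simp [X3]

lemma Sy_eq : Sy = (((Real.sqrt 2 : ℝ) : ℂ)⁻¹ * I) • Y3.map (Int.cast : ℤ → ℂ) := by
  rw [Sy, mul_smul]; congr 1
  ext a b; fin_cases a <;> fin_cases b <;> simp [Y3]

lemma Sz_eq : Sz = Z3.map (Int.cast : ℤ → ℂ) := by
  rw [Sz]
  ext a b; fin_cases a <;> fin_cases b <;> simp [Z3]

lemma nMat_eq : nMat = (1 / 2 : ℂ) • N3.map (Int.cast : ℤ → ℂ) := by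
  have := rt2
  ext a b; fin_cases a <;> fin_cases b <;>
    simp only [nMat, ketbra, Matrix.add_apply, Matrix.vecMulVec_apply, Pi.star_apply] <;>
    simp [N3, up, down] <;> simpa using this

lemma hMat_eq : hMat = (1 / 2 : ℂ) • h3.map (Int.cast : ℤ → ℂ) := by
  have := rt2
  ext a b; fin_cases a <;> fin_cases b <;>
    simp [h3, hMat, ketbra, hole, Matrix.vecMulVec_apply] <;> simpa using this

lemma sz_mul {L : ℕ} (A B : Matrix (Fin 3) (Fin 3) ℤ) (j : Fin L) :
    sz (A * B) j = sz A j * sz B j := by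
  rw [sz, sz, sz, ← site_mul]; congr 1
  exact Matrix.map_mul (f := Int.castRingHom ℂ)

lemma sz_add {L : ℕ} (A B : Matrix (Fin 3) (Fin 3) ℤ) (j : Fin L) :
    sz (A + B) j = sz A j + sz B j := by
  rw [sz, sz, sz, ← site_add]; congr 1
  ext a b; simp

lemma sz_one {L : ℕ} (j : Fin L) : sz 1 j = 1 := by
  rw [sz, ← site_one j]; congr 1
  exact Matrix.map_one _ Int.cast_zero Int.cast_one

lemma sz_comm {L : ℕ} (A B : Matrix (Fin 3) (Fin 3) ℤ) (h : A * B = B * A) (j k : Fin L) :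
    Commute (sz A j) (sz B k) := by
  by_cases hjk : j = k
  · subst hjk
    rw [Commute, SemiconjBy, ← sz_mul, ← sz_mul, h]
  · exact site_comm _ _ hjk

lemma two_inj {L : ℕ} {x y : Op L} (h : x + x = y + y) : x = y := by
  have : (1 / 2 : ℂ) • (x + x) = (1 / 2 : ℂ) • (y + y) := by rw [h]
  have e : ∀ z : Op L, (1 / 2 : ℂ) • (z + z) = z := fun z => by module
  rwa [e, e] at this

lemma heis_eq {L : ℕ} (j k : Fin L) (h : j ≠ k) : heis j k = psi j k h H9 := by
  apply two_inj
  rw [← map_add, H9_eq, map_add, map_add, map_sub, psi_kron, psi_kron, psi_kron, heis, Sx_eq, Sy_eq,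
    Sz_eq]
  simp only [site_smul, smul_mul_assoc, mul_smul_comm, smul_smul]
  have e : ((Real.sqrt 2 : ℝ) : ℂ)⁻¹ * I * (((Real.sqrt 2 : ℝ) : ℂ)⁻¹ * I) = - (1 / 2) := by
    rw [mul_mul_mul_comm, rt2, I_mul_I]; ring
  rw [rt2, e]
  simp only [sz]
  module

lemma kt_eq {L : ℕ} (u v : Fin L) (h : u ≠ v) : ktFactor u v = 1 - sz A3 u * sz B3 v := by
  have hc : ∀ A B, Commute (site A v) (site B u) := fun A B => site_comm A B h.symm
  have hz : Sz * Sz = A3.map (Int.cast : ℤ → ℂ) := by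
    rw [Sz]
    ext a b; fin_cases a <;> fin_cases b <;> simp [A3]
  have hz3 : Sz * Sz * Sz = Sz := by
    rw [Sz]
    ext a b; fin_cases a <;> fin_cases b <;> simp
  have hx : Sx * Sx = (1 / 2 : ℂ) • B3.map (Int.cast : ℤ → ℂ) := by
    rw [Sx, smul_mul_smul_comm, rt2]; congr 1
    ext a b; fin_cases a <;> fin_cases b <;> simp [B3]
    norm_num
  have hx3 : Sx * Sx * Sx = Sx := by
    rw [hx, Sx, smul_mul_smul_comm, mul_comm, ← smul_smul]; congr 1
    ext a b; fin_cases a <;> fin_cases b <;>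
      simp [B3, Matrix.mul_apply, Fin.sum_univ_three] <;> norm_num
  have hXX : site Sz u * site Sx v * (site Sz u * site Sx v)
      = site (Sz * Sz) u * site (Sx * Sx) v := by
    rw [site_mul, site_mul, (hc Sx Sz).mul_mul_mul_comm]
  rw [ktFactor, exp_cube, hXX, hz, hx, site_smul, mul_smul_comm, smul_smul]
  · simp [sz]
  · rw [hXX, (hc _ _).mul_mul_mul_comm, ← site_mul, ← site_mul, hz3, hx3]

lemma AB3 : A3 * B3 = B3 * A3 := by decide
lemma AA3 : A3 * A3 = A3 := by decide
lemma BB3 : B3 * B3 = B3 + B3 := by decide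

/-- factor -/
def FF {L : ℕ} (u v : Fin L) : Op L := if u < v then ktFactor u v else 1

lemma FF_lt {L : ℕ} {u v : Fin L} (h : u < v) : FF u v = 1 - sz A3 u * sz B3 v := by
  rw [FF, if_pos h, kt_eq _ _ h.ne]

lemma FF_not {L : ℕ} {u v : Fin L} (h : ¬ u < v) : FF u v = 1 := by
  rw [FF, if_neg h]

lemma FF_commute {L : ℕ} {u v : Fin L} (M : Op L) (h1 : Commute (sz A3 u) M)
    (h2 : Commute (sz B3 v) M) : Commute (FF u v) M := by
  by_cases h : u < v
  · rw [FF_lt h]; exact (Commute.one_left _).sub_left (h1.mul_left h2)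
  · rw [FF_not h]; exact Commute.one_left _

lemma FF_comm {L : ℕ} (u v u' v' : Fin L) : Commute (FF u v) (FF u' v') := by
  apply FF_commute <;> apply Commute.symm <;> apply FF_commute
  · exact sz_comm _ _ rfl _ _
  · exact sz_comm _ _ AB3.symm _ _
  · exact sz_comm _ _ AB3 _ _
  · exact sz_comm _ _ rfl _ _

lemma FF_sq {L : ℕ} (u v : Fin L) : FF u v * FF u v = 1 := by
  by_cases h : u < v
  · rw [FF_lt h]
    have : sz A3 u * sz B3 v * (sz A3 u * sz B3 v)
        = sz A3 u * sz B3 v + sz A3 u * sz B3 v := by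
      rw [(sz_comm B3 A3 AB3.symm v u).mul_mul_mul_comm, ← sz_mul, ← sz_mul, AA3, BB3, sz_add,
        mul_add]
    rw [mul_sub, sub_mul, sub_mul, this]; simp
  · rw [FF_not h, one_mul]

lemma site_heis {L : ℕ} (A) (l j k : Fin L) (h1 : l ≠ j) (h2 : l ≠ k) :
    Commute (site A l) (heis j k) := by
  unfold heis
  have hj : ∀ B, Commute (site A l) (site B j) := fun B => site_comm _ _ h1
  have hk : ∀ B, Commute (site A l) (site B k) := fun B => site_comm _ _ h2
  exact (((hj _).mul_right (hk _)).add_right ((hj _).mul_right (hk _))).add_right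
    ((hj _).mul_right (hk _))

/-- bond term -/
def bond {L : ℕ} (θ : ℝ) (j k : Fin L) : Op L :=
  ((Real.cos θ : ℝ) : ℂ) • heis j k + ((Real.sin θ : ℝ) : ℂ) • (heis j k) ^ 2

lemma bond_commute {L : ℕ} (θ : ℝ) (j k : Fin L) (X : Op L) (h : Commute X (heis j k)) :
    Commute X (bond θ j k) :=
  (h.smul_right _).add_right ((h.pow_right 2).smul_right _)

lemma FF_left {L : ℕ} (u j k : Fin L) (hjk : (k : ℕ) = j + 1) (h1 : u ≠ j) (h2 : u ≠ k) :
    Commute (FF u j * FF u k) (heis j k) := by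
  have hne : j ≠ k := by intro h; subst h; omega
  by_cases h : u < j
  · have h' : u < k := by rw [Fin.lt_def] at *; omega
    rw [FF_lt h, FF_lt h']
    have e : (1 - sz A3 u * sz B3 j) * (1 - sz A3 u * sz B3 k)
        = 1 - sz A3 u * (sz B3 j + sz B3 k - sz B3 j * sz B3 k) := by
      rw [mul_sub, sub_mul, sub_mul, (sz_comm B3 A3 AB3.symm j u).mul_mul_mul_comm, ← sz_mul, AA3]
      noncomm_ring
    rw [e]
    refine (Commute.one_left _).sub_left ((site_heis _ _ _ _ h1 h2).mul_left ?_)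
    rw [heis_eq _ _ hne]
    have := congrArg (psi j k hne) c5
    rw [map_mul, map_mul, map_sub, map_add, psi_kron, psi_kron, psi_kron, sz_one, sz_one, mul_one,
      one_mul] at this
    exact this.symm
  · have h' : ¬ u < k := by
      rw [Fin.lt_def] at *; rw [Ne, Fin.ext_iff] at *; omega
    rw [FF_not h, FF_not h', one_mul]; exact Commute.one_left _

lemma FF_right {L : ℕ} (v j k : Fin L) (hjk : (k : ℕ) = j + 1) (h1 : v ≠ j) (h2 : v ≠ k) :
    Commute (FF j v * FF k v) (heis j k) := by
  have hne : j ≠ k := by intro h; subst h; omega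
  by_cases h : k < v
  · have h' : j < v := by rw [Fin.lt_def] at *; omega
    rw [FF_lt h, FF_lt h']
    have e : (1 - sz A3 j * sz B3 v) * (1 - sz A3 k * sz B3 v)
        = 1 - (sz A3 j + sz A3 k - (sz A3 j * sz A3 k + sz A3 j * sz A3 k)) * sz B3 v := by
      rw [mul_sub, sub_mul, sub_mul, (sz_comm B3 A3 AB3.symm v k).mul_mul_mul_comm, ← sz_mul, BB3,
        sz_add]
      noncomm_ring
    rw [e]
    refine (Commute.one_left _).sub_left (Commute.mul_left ?_ (site_heis _ _ _ _ h1 h2))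
    rw [heis_eq _ _ hne]
    have := congrArg (psi j k hne) c6
    rw [map_mul, map_mul, map_sub, map_add, map_add, psi_kron, psi_kron, psi_kron, sz_one, sz_one,
      mul_one, one_mul] at this
    exact this.symm
  · have h' : ¬ j < v := by
      rw [Fin.lt_def] at *; rw [Ne, Fin.ext_iff] at *; omega
    rw [FF_not h, FF_not h', one_mul]; exact Commute.one_left _

open scoped IsMulCommutative in
lemma UKT_conj {L : ℕ} (θ : ℝ) (j k : Fin L) (hjk : (k : ℕ) = j + 1) :
    UKT L * bond θ j k * UKT L = FF j k * bond θ j k * FF j k := by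
  have hne : j ≠ k := by intro h; subst h; omega
  let s : Set (Op L) := Set.range fun p : Fin L × Fin L => FF p.1 p.2
  have hs : ∀ a ∈ s, ∀ b ∈ s, a * b = b * a := by
    rintro _ ⟨p, rfl⟩ _ ⟨q, rfl⟩
    exact FF_comm _ _ _ _
  haveI := Submonoid.isMulCommutative_closure _ hs
  let F : Fin L → Fin L → Submonoid.closure s := fun u v =>
    ⟨FF u v, Submonoid.subset_closure ⟨(u, v), rfl⟩⟩
  have hU : UKT L = (Submonoid.closure s).subtype (∏ u, ∏ v, F u v) := by
    simp only [Fin.prod_univ_def, map_list_prod, List.map_map]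
    unfold UKT
    congr 1
    refine List.map_congr_left fun u _ => ?_
    simp only [Function.comp_apply, map_list_prod, List.map_map]
    rfl
  have hone : ∀ u v : Fin L, ¬ u < v → F u v = 1 := fun u v h => Subtype.ext (FF_not h)
  rw [hU]
  refine core (Submonoid.closure s).subtype F (fun u v => Subtype.ext (FF_sq u v)) _ j k hne
    (hone _ _ (lt_irrefl _)) (hone _ _ (lt_irrefl _)) (hone _ _ (by rw [Fin.lt_def]; omega))
    ?_ ?_ ?_
  · intro u v h1 h2 h3 h4
    exact FF_commute _ (bond_commute _ _ _ _ (site_heis _ _ _ _ h1 h2))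
      (bond_commute _ _ _ _ (site_heis _ _ _ _ h3 h4))
  · intro u h1 h2
    exact bond_commute _ _ _ _ (FF_left u j k hjk h1 h2)
  · intro v h1 h2
    exact bond_commute _ _ _ _ (FF_right v j k hjk h1 h2)

lemma local_eq {L : ℕ} (θ : ℝ) (j k : Fin L) (hjk : (k : ℕ) = j + 1) (hne : j ≠ k) :
    bond θ j k + UKT L * bond θ j k * UKT L =
      ((Real.cos θ : ℝ) : ℂ) • psi j k hne G9 + ((Real.sin θ : ℝ) : ℂ) • psi j k hne GG9 := by
  have hK : FF j k = psi j k hne K9 := by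
    rw [FF_lt (by rw [Fin.lt_def]; omega), K9_eq, map_sub, map_one, psi_kron]
  rw [UKT_conj θ j k hjk, hK, bond, heis_eq _ _ hne, sq, ← map_mul, HH9_eq, ← G9_eq, ← GG9_eq]
  simp only [map_add, map_mul, mul_add, add_mul, mul_smul_comm, smul_mul_assoc]
  module

lemma site_bond {L : ℕ} (X : Op L) (j k : Fin L) (θ : ℝ)
    (hj : ∀ A, Commute X (site A j)) (hk : ∀ A, Commute X (site A k)) (hjk : (k : ℕ) = j + 1) :
    Commute X (bond θ j k + UKT L * bond θ j k * UKT L) := by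
  have hb : Commute X (bond θ j k) := by
    apply bond_commute
    unfold heis
    exact (((hj _).mul_right (hk _)).add_right ((hj _).mul_right (hk _))).add_right
      ((hj _).mul_right (hk _))
  have hF : Commute X (FF j k) := (FF_commute X (hj _).symm (hk _).symm).symm
  rw [UKT_conj θ j k hjk]
  exact hb.add_right ((hF.mul_right hb).mul_right hF)

lemma local_P {L : ℕ} (θ : ℝ) (j k : Fin L) (hjk : (k : ℕ) = j + 1) :
    Commute (bond θ j k + UKT L * bond θ j k * UKT L) (Pproj L) := by
  have hne : j ≠ k := by intro h; subst h; omega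
  let Q : Op L := tens fun l => if l = j ∨ l = k then 1 else nMat
  have hQ : ∀ A l, (l = j ∨ l = k) → Commute Q (site A l) := by
    intro A l hl
    rw [Commute, SemiconjBy, site_eq, tens_mul, tens_mul]
    congr 1; ext1 m
    by_cases hm : m = l
    · subst hm; simp [hl]
    · simp [hm]
  have hP : Pproj L = site nMat j * site nMat k * Q := by
    rw [site_eq, site_eq, tens_mul, tens_mul]
    change tens (fun _ => nMat) = _
    congr 1; ext1 m
    by_cases h1 : m = j
    · subst h1; simp [hne]
    · by_cases h2 : m = k
      · subst h2; simp [h1]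
      · simp [h1, h2]
  rw [hP]
  refine Commute.mul_right ?_ (site_bond Q j k θ (fun A => hQ A j (.inl rfl))
    (fun A => hQ A k (.inr rfl)) hjk).symm
  rw [local_eq θ j k hjk hne, nMat_eq, site_smul, site_smul, smul_mul_smul_comm]
  refine Commute.smul_right ?_ _
  have e1 := congrArg (psi j k hne) c1
  have e2 := congrArg (psi j k hne) c2
  rw [map_mul, map_mul, psi_kron] at e1 e2
  exact (Commute.smul_left e1 _).add_left (Commute.smul_left e2 _)

lemma local_h {L : ℕ} (θ : ℝ) (j k : Fin L) (hjk : (k : ℕ) = j + 1) :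
    Commute (bond θ j k + UKT L * bond θ j k * UKT L) (∑ l : Fin L, site hMat l) := by
  have hne : j ≠ k := by intro h; subst h; omega
  rw [← Finset.add_sum_erase _ _ (Finset.mem_univ j),
      ← Finset.add_sum_erase (Finset.univ.erase j) _ (a := k) (by simp [hne.symm]), ← add_assoc]
  refine Commute.add_right ?_ (Commute.sum_right _ _ _ fun l hl => ?_)
  · rw [local_eq θ j k hjk hne, hMat_eq, site_smul, site_smul, ← smul_add]
    refine Commute.smul_right ?_ _
    have e1 := congrArg (psi j k hne) c3
    have e2 := congrArg (psi j k hne) c4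
    rw [map_mul, map_mul, map_add, psi_kron, psi_kron, sz_one, sz_one, mul_one, one_mul] at e1 e2
    exact (Commute.smul_left e1 _).add_left (Commute.smul_left e2 _)
  · simp only [Finset.mem_erase, Finset.mem_univ, and_true] at hl
    exact (site_bond _ j k θ (fun A => site_comm _ _ hl.2) (fun A => site_comm _ _ hl.1) hjk).symm

lemma HSD_eq (L : ℕ) (θ : ℝ) : HSD L θ = ∑ j : Fin L, if h : (j : ℕ) + 1 < L then
    bond θ j ⟨(j : ℕ) + 1, h⟩ + UKT L * bond θ j ⟨(j : ℕ) + 1, h⟩ * UKT L else 0 := by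
  rw [HSD, HBLBQ, Finset.mul_sum, Finset.sum_mul, ← Finset.sum_add_distrib]
  refine Finset.sum_congr rfl fun j _ => ?_
  split_ifs
  · rfl
  · simp

lemma HSD_commute (L : ℕ) (θ : ℝ) (X : Op L) (hX : ∀ j k : Fin L, (k : ℕ) = j + 1 →
    Commute (bond θ j k + UKT L * bond θ j k * UKT L) X) : Commute (HSD L θ) X := by
  rw [HSD_eq]
  refine Commute.sum_left _ _ _ fun j _ => ?_
  split_ifs with h
  · exact hX _ _ rfl
  · exact Commute.zero_left _

/-- The self-dual Hamiltonian `H_SD(θ)` commutes with the projection `P` onto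
the hole-free subspace and with the total hole number `N_h = Σ_j h_j`; in particular the
hole-free subspace (the range of `P`, i.e. the fixed vectors of `P`) is invariant under
`H_SD(θ)`. -/
theorem HSD_hole_symmetry (L : ℕ) (hL : 2 ≤ L) (θ : ℝ) :
    Commute (HSD L θ) (Pproj L) ∧
      Commute (HSD L θ) (∑ j : Fin L, site hMat j) ∧
      (∀ v : (Fin L → Fin 3) → ℂ, (Pproj L).mulVec v = v →
        (Pproj L).mulVec ((HSD L θ).mulVec v) = (HSD L θ).mulVec v) := by
  have h := HSD_commute L θ (Pproj L) (fun j k hjk => local_P θ j k hjk)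
  refine ⟨h, HSD_commute L θ _ (fun j k hjk => local_h θ j k hjk), fun v hv => ?_⟩
  rw [Matrix.mulVec_mulVec, ← h.eq, ← Matrix.mulVec_mulVec, hv]

end
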